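/- For all m ≥ 1, the simple centralizer of x_1 in SB_{2+m} has cardinality c_{2+m}(x_1) = 2 · F_{2m−1}. -/

import Mathlib

/-- The defining relations of the positive braid monoid `MB_∞` on generators
`x i`, `i : ℕ+`: the braid relations and the far-commutation relations. -/
def BraidRel : FreeMonoid ℕ+ → FreeMonoid ℕ+ → Prop := fun a b =>
  (∃ i : ℕ+, a = FreeMonoid.of (i + 1) * FreeMonoid.of i * FreeMonoid.of (i + 1) ∧
      b = FreeMonoid.of i * FreeMonoid.of (i + 1) * FreeMonoid.of i) ∨
  (∃ i j : ℕ+, i + 2 ≤ j ∧ a = FreeMonoid.of i * FreeMonoid.of j ∧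
      b = FreeMonoid.of j * FreeMonoid.of i)

/-- The congruence generated by the braid relations. -/
def braidCon : Con (FreeMonoid ℕ+) := conGen BraidRel

/-- The positive braid monoid `MB_∞`. -/
abbrev MB : Type := braidCon.Quotient

/-- The generator `x_i` of `MB_∞`, for `i : ℕ+`. -/
def braidGen (i : ℕ+) : MB := braidCon.mk' (FreeMonoid.of i)

/-- The generator `x_i` of `MB_∞`, indexed by a natural number `i ≥ 1`
(junk value `x_1` for `i = 0`). -/
def X (i : ℕ) : MB := braidGen ⟨max i 1, lt_of_lt_of_le one_pos (le_max_right i 1)⟩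

/-- `x_i` divides `β`: `β = δ * x_i * ε` for some `δ ε ∈ MB_∞`. -/
def GenDvd (i : ℕ) (β : MB) : Prop := ∃ δ ε : MB, β = δ * X i * ε

/-- `x_i` left-divides `β`: `β = x_i * ε` for some `ε ∈ MB_∞`. -/
def GenDvdL (i : ℕ) (β : MB) : Prop := ∃ ε : MB, β = X i * ε

/-- `x_i` right-divides `β`: `β = δ * x_i` for some `δ ∈ MB_∞`. -/
def GenDvdR (i : ℕ) (β : MB) : Prop := ∃ δ : MB, β = δ * X i

/-- The set `SB_n` of simple braids in `MB_n`: products of words in the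
generators `x_1, …, x_{n-1}` in which each generator appears at most once. -/
def SB (n : ℕ) : Set MB :=
  {β | ∃ w : List ℕ, w.Nodup ∧ (∀ i ∈ w, 1 ≤ i ∧ i < n) ∧ β = (w.map X).prod}

/-- The simple centralizer `C_n(β)` of `β` in `SB_n`. -/
def C (n : ℕ) (β : MB) : Set MB := {γ ∈ SB n | β * γ = γ * β}

/-- `c_n(β)`, the cardinality of the simple centralizer `C_n(β)`. -/
noncomputable def c (n : ℕ) (β : MB) : ℕ := (C n β).ncard

/-- The first bubble-sort operator on triples of bits. -/
def sortFst : Function.End (Bool × Bool × Bool) := fun p => (p.1 && p.2.1, p.1 || p.2.1, p.2.2)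

/-- The second bubble-sort operator on triples of bits. -/
def sortSnd : Function.End (Bool × Bool × Bool) := fun p => (p.1, p.2.1 && p.2.2, p.2.1 || p.2.2)

theorem sortFst_mul_self : sortFst * sortFst = sortFst := by
  funext ⟨x, y, z⟩
  cases x <;> cases y <;> cases z <;> rfl

theorem sortSnd_mul_self : sortSnd * sortSnd = sortSnd := by
  funext ⟨x, y, z⟩
  cases x <;> cases y <;> cases z <;> rfl

theorem sort_braid : sortSnd * sortFst * sortSnd = sortFst * sortSnd * sortFst := by
  funext ⟨x, y, z⟩
  cases x <;> cases y <;> cases z <;> rfl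

theorem Function.End.ne_of_apply_ne {α : Type*} {f g : Function.End α} (p : α)
    (h : f p ≠ g p) : f ≠ g :=
  fun e => h (by rw [e])

theorem sortFst_ne_one : sortFst ≠ 1 :=
  Function.End.ne_of_apply_ne (true, false, false) (by decide)

theorem sortFst_mul_sortSnd_ne_sortSnd : sortFst * sortSnd ≠ sortSnd :=
  Function.End.ne_of_apply_ne (true, true, false) (by decide)

theorem sortSnd_mul_sortFst_ne_sortSnd : sortSnd * sortFst ≠ sortSnd :=
  Function.End.ne_of_apply_ne (true, false, false) (by decide)

theorem sortFst_mul_sortSnd_ne : sortFst * sortSnd ≠ sortSnd * sortFst :=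
  Function.End.ne_of_apply_ne (true, true, false) (by decide)

theorem sortFst_mul_sortSnd_mul_sortFst_ne_left :
    sortFst * sortSnd * sortFst ≠ sortFst * sortSnd :=
  Function.End.ne_of_apply_ne (true, false, false) (by decide)

theorem sortFst_mul_sortSnd_mul_sortFst_ne_right :
    sortFst * sortSnd * sortFst ≠ sortSnd * sortFst :=
  Function.End.ne_of_apply_ne (true, true, false) (by decide)

/-- The operator assigned to the generator `x_i` by `braidSort k`. -/
def genSort (k i : ℕ) : Function.End (Bool × Bool × Bool) :=
  if i = k then sortFst else if i = k + 1 then sortSnd else 1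

theorem genSort_braid (k i : ℕ) :
    genSort k (i + 1) * genSort k i * genSort k (i + 1) =
      genSort k i * genSort k (i + 1) * genSort k i := by
  unfold genSort
  split_ifs <;> first
    | omega
    | simp only [mul_one, one_mul, sortFst_mul_self, sortSnd_mul_self, sort_braid]

theorem genSort_comm (k i j : ℕ) (h : i + 2 ≤ j) :
    genSort k i * genSort k j = genSort k j * genSort k i := by
  unfold genSort
  split_ifs <;> first
    | omega
    | simp only [mul_one, one_mul]

/-- The action of `MB_∞` by sorting operators in which only `x_k` and `x_{k+1}` act
nontrivially. -/
def braidSort (k : ℕ) : MB →* Function.End (Bool × Bool × Bool) :=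
  braidCon.lift (FreeMonoid.lift fun i : ℕ+ => genSort k i) <| by
    refine Con.conGen_le.2 ?_
    rintro a b (⟨i, rfl, rfl⟩ | ⟨i, j, h, rfl, rfl⟩)
    · simpa [Con.ker_rel] using genSort_braid k i
    · simpa [Con.ker_rel] using genSort_comm k i j (by exact_mod_cast h)

theorem braidSort_X {i : ℕ} (k : ℕ) (hi : 1 ≤ i) : braidSort k (X i) = genSort k i := by
  change FreeMonoid.lift (fun i : ℕ+ => genSort k i) (FreeMonoid.of _) = _
  exact (FreeMonoid.lift_eval_of _ _).trans (congrArg (genSort k) (max_eq_left hi))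

theorem braidSort_X_self {k : ℕ} (hk : 1 ≤ k) : braidSort k (X k) = sortFst := by
  simp [braidSort_X k hk, genSort]

theorem braidSort_X_succ (k : ℕ) : braidSort k (X (k + 1)) = sortSnd := by
  simp [braidSort_X, genSort]

theorem braidSort_X_of_ne {k i : ℕ} (hi : 1 ≤ i) (h : i ≠ k) (h' : i ≠ k + 1) :
    braidSort k (X i) = 1 := by
  simp [braidSort_X k hi, genSort, h, h']

theorem X_comm {i j : ℕ} (hi : 1 ≤ i) (h : i + 2 ≤ j) : X i * X j = X j * X i := by
  refine (Con.eq braidCon).2 (ConGen.Rel.of _ _ (Or.inr ⟨_, _, ?_, rfl, rfl⟩))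
  change max i 1 + 2 ≤ max j 1
  omega

/-- The braid represented by a word. -/
abbrev wordProd (w : List ℕ) : MB := (w.map X).prod

theorem wordProd_append (u v : List ℕ) : wordProd (u ++ v) = wordProd u * wordProd v := by
  simp [wordProd]

theorem wordProd_cons (i : ℕ) (v : List ℕ) : wordProd (i :: v) = X i * wordProd v := by
  simp [wordProd]

theorem X_comm_wordProd {i : ℕ} {w : List ℕ}
    (h : ∀ j ∈ w, X i * X j = X j * X i) : X i * wordProd w = wordProd w * X i := by
  refine (Commute.list_prod_right (w.map X) (X i) fun y hy => ?_)
  obtain ⟨j, hj, rfl⟩ := List.mem_map.1 hy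
  exact h j hj

theorem braidSort_wordProd_eq_one {k : ℕ} {w : List ℕ} (hw : ∀ i ∈ w, 1 ≤ i)
    (hk : k ∉ w) (hk' : k + 1 ∉ w) : braidSort k (wordProd w) = 1 := by
  induction w with
  | nil => simp [wordProd]
  | cons i w ih =>
    simp only [List.mem_cons, not_or, forall_eq_or_imp] at hw hk hk'
    rw [wordProd_cons, map_mul, ih hw.2 hk.2 hk'.2,
      braidSort_X_of_ne hw.1 (Ne.symm hk.1) (Ne.symm hk'.1), one_mul]

theorem braidSort_wordProd_of_mem {k : ℕ} {w : List ℕ} (hw : ∀ i ∈ w, 1 ≤ i)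
    (hnd : w.Nodup) (hk : k ∈ w) (hk' : k + 1 ∉ w) : braidSort k (wordProd w) = sortFst := by
  obtain ⟨u, v, rfl⟩ := List.append_of_mem hk
  rw [List.nodup_middle, List.nodup_cons] at hnd
  simp only [List.mem_append, List.mem_cons, not_or] at hnd hw hk'
  rw [wordProd_append, wordProd_cons, map_mul, map_mul,
    braidSort_wordProd_eq_one (fun i hi => hw i (.inl hi)) hnd.1.1 hk'.1,
    braidSort_wordProd_eq_one (fun i hi => hw i (.inr (.inr hi))) hnd.1.2 hk'.2.2,
    braidSort_X_self (hw k (.inr (.inl rfl))), one_mul, mul_one]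

theorem braidSort_wordProd_of_succ_mem {k : ℕ} {w : List ℕ} (hw : ∀ i ∈ w, 1 ≤ i)
    (hnd : w.Nodup) (hk : k + 1 ∈ w) :
    braidSort k (wordProd w) = sortSnd ∨ braidSort k (wordProd w) = sortFst * sortSnd ∨
      braidSort k (wordProd w) = sortSnd * sortFst := by
  obtain ⟨u, v, rfl⟩ := List.append_of_mem hk
  rw [List.nodup_middle, List.nodup_cons, List.nodup_append] at hnd
  simp only [List.mem_append, List.mem_cons, not_or] at hnd hw
  obtain ⟨⟨hku, hkv⟩, hu, hv, huv⟩ := hnd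
  have hwu : ∀ i ∈ u, 1 ≤ i := fun i hi => hw i (.inl hi)
  have hwv : ∀ i ∈ v, 1 ≤ i := fun i hi => hw i (.inr (.inr hi))
  rw [wordProd_append, wordProd_cons, map_mul, map_mul, braidSort_X_succ]
  by_cases h : k ∈ u
  · have h' : k ∉ v := fun h' => huv k h k h' rfl
    simp [braidSort_wordProd_of_mem hwu hu h hku, braidSort_wordProd_eq_one hwv h' hkv]
  · rw [braidSort_wordProd_eq_one hwu h hku]
    by_cases h' : k ∈ v
    · simp [braidSort_wordProd_of_mem hwv hv h' hkv]
    · simp [braidSort_wordProd_eq_one hwv h' hkv]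

/-- The simple braids in `SB_n` not involving the generator `x_2`. -/
def SBAvoid (n : ℕ) : Set MB :=
  {β | ∃ w : List ℕ, w.Nodup ∧ (∀ i ∈ w, 1 ≤ i ∧ i ≠ 2 ∧ i < n) ∧ β = wordProd w}

/-- The simple braids in `SB_{n+1}` involving `x_n` but not `x_2`. -/
def SBAvoidTop (n : ℕ) : Set MB :=
  {β | ∃ w : List ℕ, w.Nodup ∧ (∀ i ∈ w, 1 ≤ i ∧ i ≠ 2 ∧ i < n + 1) ∧ n ∈ w ∧ β = wordProd w}

theorem C_X_one (n : ℕ) : C n (X 1) = SBAvoid n := by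
  ext γ
  constructor
  · rintro ⟨⟨w, hnd, hw, rfl⟩, hc⟩
    refine ⟨w, hnd, fun i hi => ⟨(hw i hi).1, ?_, (hw i hi).2⟩, rfl⟩
    rintro rfl
    replace hc := congrArg (braidSort 1) hc
    rw [map_mul, map_mul, braidSort_X_self le_rfl] at hc
    rcases braidSort_wordProd_of_succ_mem (fun i hi => (hw i hi).1) hnd hi with h | h | h <;>
      rw [h] at hc
    · exact sortFst_mul_sortSnd_ne hc
    · rw [← mul_assoc, sortFst_mul_self] at hc
      exact sortFst_mul_sortSnd_mul_sortFst_ne_left hc.symm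
    · rw [← mul_assoc, mul_assoc sortSnd, sortFst_mul_self] at hc
      exact sortFst_mul_sortSnd_mul_sortFst_ne_right hc
  · rintro ⟨w, hnd, hw, rfl⟩
    refine ⟨⟨w, hnd, fun i hi => ⟨(hw i hi).1, (hw i hi).2.2⟩, rfl⟩, X_comm_wordProd fun j hj => ?_⟩
    obtain ⟨h1, h2, -⟩ := hw j hj
    rcases h1.eq_or_lt with rfl | h1
    · rfl
    · exact X_comm le_rfl (by omega)

theorem SBAvoid_succ (n : ℕ) : SBAvoid (n + 1) = SBAvoid n ∪ SBAvoidTop n := by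
  ext β
  constructor
  · rintro ⟨w, hnd, hw, rfl⟩
    by_cases h : n ∈ w
    · exact .inr ⟨w, hnd, hw, h, rfl⟩
    · refine .inl ⟨w, hnd, fun i hi => ⟨(hw i hi).1, (hw i hi).2.1, ?_⟩, rfl⟩
      have : i ≠ n := fun e => h (e ▸ hi)
      have := (hw i hi).2.2
      omega
  · rintro (⟨w, hnd, hw, rfl⟩ | ⟨w, hnd, hw, -, rfl⟩)
    · exact ⟨w, hnd, fun i hi => ⟨(hw i hi).1, (hw i hi).2.1, (hw i hi).2.2.trans n.lt_succ_self⟩,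
        rfl⟩
    · exact ⟨w, hnd, hw, rfl⟩

theorem SBAvoidTop_succ_subset (n : ℕ) :
    SBAvoidTop (n + 1) ⊆
      (· * X (n + 1)) '' SBAvoid (n + 1) ∪ (X (n + 1) * ·) '' SBAvoidTop n := by
  rintro _ ⟨w, hnd, hw, hmem, rfl⟩
  obtain ⟨u, v, rfl⟩ := List.append_of_mem hmem
  rw [List.nodup_middle, List.nodup_cons] at hnd
  obtain ⟨hn, hnd⟩ := hnd
  have hw' : ∀ i ∈ u ++ v, 1 ≤ i ∧ i ≠ 2 ∧ i < n + 1 := fun i hi => by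
    have hne : i ≠ n + 1 := fun e => hn (e ▸ hi)
    have := hw i (by simp only [List.mem_append, List.mem_cons] at hi ⊢; tauto)
    omega
  have comm : ∀ l : List ℕ, (∀ i ∈ l, i ∈ u ++ v) → n ∉ l →
      X (n + 1) * wordProd l = wordProd l * X (n + 1) := fun l hl hnl =>
    X_comm_wordProd fun j hj => by
      have := hw' j (hl j hj)
      have hne : j ≠ n := fun e => hnl (e ▸ hj)
      exact (X_comm this.1 (by omega)).symm
  by_cases h : n ∈ v
  · have hu : n ∉ u := fun hu => (List.nodup_append.1 hnd).2.2 n hu n h rfl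
    refine .inr ⟨wordProd (u ++ v), ⟨_, hnd, hw', by simp [h], rfl⟩, ?_⟩
    change X (n + 1) * _ = _
    rw [wordProd_append, wordProd_append, wordProd_cons, ← mul_assoc, ← mul_assoc,
      comm u (fun i hi => by simp [hi]) hu]
  · refine .inl ⟨wordProd (u ++ v), ⟨_, hnd, hw', rfl⟩, ?_⟩
    change _ * X (n + 1) = _
    rw [wordProd_append, wordProd_append, wordProd_cons, mul_assoc,
      comm v (fun i hi => by simp [hi]) h]

theorem SBAvoidTop_subset_SBAvoid (n : ℕ) : SBAvoidTop n ⊆ SBAvoid (n + 1) := by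
  rw [SBAvoid_succ]
  exact Set.subset_union_right

theorem SBAvoidTop_succ {n : ℕ} (hn : 2 ≤ n) :
    SBAvoidTop (n + 1) =
      (· * X (n + 1)) '' SBAvoid (n + 1) ∪ (X (n + 1) * ·) '' SBAvoidTop n := by
  have key : ∀ w : List ℕ, (∀ i ∈ w, 1 ≤ i ∧ i ≠ 2 ∧ i < n + 1) →
      n + 1 ∉ w ∧ ∀ i, i ∈ w ∨ i = n + 1 → 1 ≤ i ∧ i ≠ 2 ∧ i < n + 1 + 1 := by
    refine fun w hw => ⟨fun h => absurd (hw _ h).2.2 (by omega), ?_⟩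
    rintro i (hi | rfl)
    · have := hw i hi
      omega
    · omega
  refine (SBAvoidTop_succ_subset n).antisymm ?_
  rintro _ (⟨_, ⟨w, hnd, hw, rfl⟩, rfl⟩ | ⟨_, hβ, rfl⟩)
  · obtain ⟨hmem, hw'⟩ := key w hw
    refine ⟨w ++ [n + 1], ?_, fun i hi => hw' i (by simpa using hi), by simp, ?_⟩
    · rw [List.nodup_append]
      simpa [hnd] using fun i hi (e : i = n + 1) => hmem (e ▸ hi)
    · simp [wordProd]
  · obtain ⟨w, hnd, hw, rfl⟩ := SBAvoidTop_subset_SBAvoid n hβ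
    obtain ⟨hmem, hw'⟩ := key w hw
    exact ⟨(n + 1) :: w, by simp [hnd, hmem], fun i hi => hw' i (by simp at hi; tauto), by simp,
      (wordProd_cons _ _).symm⟩

theorem braidSort_of_mem_SBAvoid {n : ℕ} {β : MB} (hβ : β ∈ SBAvoid n) : braidSort n β = 1 := by
  obtain ⟨w, -, hw, rfl⟩ := hβ
  exact braidSort_wordProd_eq_one (fun i hi => (hw i hi).1)
    (fun h => absurd (hw _ h).2.2 (by omega)) (fun h => absurd (hw _ h).2.2 (by omega))

theorem braidSort_of_mem_SBAvoidTop {n : ℕ} {β : MB} (hβ : β ∈ SBAvoidTop n) :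
    braidSort n β = sortFst := by
  obtain ⟨w, hnd, hw, hn, rfl⟩ := hβ
  exact braidSort_wordProd_of_mem (fun i hi => (hw i hi).1) hnd hn
    (fun h => absurd (hw _ h).2.2 (by omega))

theorem braidSort_of_mem_SBAvoid_succ {n : ℕ} {β : MB} (hβ : β ∈ SBAvoid (n + 1)) :
    braidSort n β = 1 ∨ braidSort n β = sortFst := by
  rw [SBAvoid_succ] at hβ
  exact hβ.imp braidSort_of_mem_SBAvoid braidSort_of_mem_SBAvoidTop

theorem braidSort_eq_of_mul_X {n : ℕ} {β β' : MB} (hβ : β ∈ SBAvoid (n + 1))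
    (hβ' : β' ∈ SBAvoid (n + 1))
    (h : ∀ k, braidSort k (β * X (n + 1)) = braidSort k (β' * X (n + 1))) (k : ℕ) :
    braidSort k β = braidSort k β' := by
  have hk := h k
  simp only [map_mul] at hk
  by_cases h1 : n + 1 = k
  · subst h1
    rw [braidSort_of_mem_SBAvoid hβ, braidSort_of_mem_SBAvoid hβ']
  by_cases h2 : n + 1 = k + 1
  · obtain rfl : n = k := by omega
    rw [braidSort_X_succ] at hk
    rcases braidSort_of_mem_SBAvoid_succ hβ with e | e <;>
      rcases braidSort_of_mem_SBAvoid_succ hβ' with e' | e' <;>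
      rw [e, e'] at hk ⊢
    · rw [one_mul] at hk
      exact absurd hk.symm sortFst_mul_sortSnd_ne_sortSnd
    · rw [one_mul] at hk
      exact absurd hk sortFst_mul_sortSnd_ne_sortSnd
  · simpa [braidSort_X_of_ne (by omega : 1 ≤ n + 1) h1 h2] using hk

theorem braidSort_eq_of_X_mul {n : ℕ} {β β' : MB} (hβ : β ∈ SBAvoidTop n)
    (hβ' : β' ∈ SBAvoidTop n)
    (h : ∀ k, braidSort k (X (n + 1) * β) = braidSort k (X (n + 1) * β')) (k : ℕ) :
    braidSort k β = braidSort k β' := by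
  have hk := h k
  simp only [map_mul] at hk
  by_cases h1 : n + 1 = k
  · subst h1
    rw [braidSort_of_mem_SBAvoid (SBAvoidTop_subset_SBAvoid n hβ),
      braidSort_of_mem_SBAvoid (SBAvoidTop_subset_SBAvoid n hβ')]
  by_cases h2 : n + 1 = k + 1
  · obtain rfl : n = k := by omega
    rw [braidSort_of_mem_SBAvoidTop hβ, braidSort_of_mem_SBAvoidTop hβ']
  · simpa [braidSort_X_of_ne (by omega : 1 ≤ n + 1) h1 h2] using hk

theorem braidSort_mul_X_ne_X_mul {n : ℕ} {β β' : MB} (hβ : β ∈ SBAvoid (n + 1))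
    (hβ' : β' ∈ SBAvoidTop n) :
    braidSort n (β * X (n + 1)) ≠ braidSort n (X (n + 1) * β') := by
  rw [map_mul, map_mul, braidSort_X_succ, braidSort_of_mem_SBAvoidTop hβ']
  rcases braidSort_of_mem_SBAvoid_succ hβ with e | e <;> rw [e]
  · rw [one_mul]
    exact sortSnd_mul_sortFst_ne_sortSnd.symm
  · exact sortFst_mul_sortSnd_ne

theorem braidSort_ne_of_mem_SBAvoidTop {n : ℕ} {β β' : MB} (hβ : β ∈ SBAvoid (n + 1))
    (hβ' : β' ∈ SBAvoidTop (n + 1)) : braidSort (n + 1) β ≠ braidSort (n + 1) β' := by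
  rw [braidSort_of_mem_SBAvoid hβ, braidSort_of_mem_SBAvoidTop hβ']
  exact sortFst_ne_one.symm

/-- The sorting operators separate the elements of `SBAvoid n`. -/
theorem SBAvoid_ext {n : ℕ} {β β' : MB} (hβ : β ∈ SBAvoid n) (hβ' : β' ∈ SBAvoid n)
    (h : ∀ k, braidSort k β = braidSort k β') : β = β' := by
  have nil : ∀ γ ∈ SBAvoid 1, γ = 1 := by
    rintro _ ⟨w, -, hw, rfl⟩
    obtain rfl : w = [] := List.eq_nil_iff_forall_not_mem.2 fun i hi => by
      have := hw i hi
      omega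
    simp [wordProd]
  have mono : SBAvoid n ⊆ SBAvoid (n + 1) := by
    rw [SBAvoid_succ]
    exact Set.subset_union_left
  replace hβ := mono hβ
  replace hβ' := mono hβ'
  clear mono
  induction n generalizing β β' with
  | zero => rw [nil β hβ, nil β' hβ']
  | succ n ih =>
    rw [SBAvoid_succ] at hβ hβ'
    rcases hβ with hβ | hβ <;> rcases hβ' with hβ' | hβ'
    · exact ih h hβ hβ'
    · exact absurd (h (n + 1)) (braidSort_ne_of_mem_SBAvoidTop hβ hβ')
    · exact absurd (h (n + 1)).symm (braidSort_ne_of_mem_SBAvoidTop hβ' hβ)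
    · rcases SBAvoidTop_succ_subset n hβ with ⟨γ, hγ, rfl⟩ | ⟨γ, hγ, rfl⟩ <;>
        rcases SBAvoidTop_succ_subset n hβ' with ⟨γ', hγ', rfl⟩ | ⟨γ', hγ', rfl⟩
      · exact congrArg (· * X (n + 1)) (ih (braidSort_eq_of_mul_X hγ hγ' h) hγ hγ')
      · exact absurd (h n) (braidSort_mul_X_ne_X_mul hγ hγ')
      · exact absurd (h n).symm (braidSort_mul_X_ne_X_mul hγ' hγ)
      · exact congrArg (X (n + 1) * ·) (ih (braidSort_eq_of_X_mul hγ hγ' h)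
          (SBAvoidTop_subset_SBAvoid n hγ) (SBAvoidTop_subset_SBAvoid n hγ'))

theorem encard_SBAvoid_succ_succ (n : ℕ) :
    (SBAvoid (n + 2)).encard = (SBAvoid (n + 1)).encard + (SBAvoidTop (n + 1)).encard := by
  rw [SBAvoid_succ (n + 1)]
  refine Set.encard_union_eq (Set.disjoint_left.2 fun β h h' => ?_)
  exact braidSort_ne_of_mem_SBAvoidTop h h' rfl

theorem encard_SBAvoidTop_succ {n : ℕ} (hn : 2 ≤ n) :
    (SBAvoidTop (n + 1)).encard = (SBAvoid (n + 1)).encard + (SBAvoidTop n).encard := by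
  rw [SBAvoidTop_succ hn, Set.encard_union_eq, Set.InjOn.encard_image, Set.InjOn.encard_image]
  · intro β hβ β' hβ' h
    exact SBAvoid_ext (SBAvoidTop_subset_SBAvoid n hβ) (SBAvoidTop_subset_SBAvoid n hβ')
      (braidSort_eq_of_X_mul hβ hβ' fun k => congrArg (braidSort k) h)
  · intro β hβ β' hβ' h
    exact SBAvoid_ext hβ hβ' (braidSort_eq_of_mul_X hβ hβ' fun k => congrArg (braidSort k) h)
  · rw [Set.disjoint_left]
    rintro _ ⟨γ, hγ, rfl⟩ ⟨γ', hγ', h⟩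
    exact braidSort_mul_X_ne_X_mul hγ hγ' (congrArg (braidSort n) h.symm)

theorem SBAvoidTop_two : SBAvoidTop 2 = ∅ := by
  rw [Set.eq_empty_iff_forall_notMem]
  rintro _ ⟨w, -, hw, h, rfl⟩
  exact (hw 2 h).2.1 rfl

theorem SBAvoid_three : SBAvoid 3 = {1, X 1} := by
  ext β
  constructor
  · rintro ⟨w, hnd, hw, rfl⟩
    have hw' : ∀ i ∈ w, i = 1 := fun i hi => by
      have := hw i hi
      omega
    match w with
    | [] => simp [wordProd]
    | [i] => simp [wordProd, hw' i]
    | i :: j :: l =>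
      have := (hw' i (by simp)).trans (hw' j (by simp)).symm
      simp [this] at hnd
  · rintro (rfl | rfl)
    · exact ⟨[], by simp, by simp, by simp [wordProd]⟩
    · exact ⟨[1], by simp, by simp, by simp [wordProd]⟩

theorem encard_SBAvoid (k : ℕ) :
    (SBAvoid (k + 3)).encard = ((2 * Nat.fib (2 * k + 1) : ℕ) : ℕ∞) ∧
      (SBAvoidTop (k + 2)).encard = ((2 * Nat.fib (2 * k) : ℕ) : ℕ∞) := by
  induction k with
  | zero =>
    have hne : (1 : MB) ≠ X 1 := fun h => by
      have := congrArg (braidSort 1) h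
      rw [map_one, braidSort_X_self le_rfl] at this
      exact sortFst_ne_one this.symm
    simp [SBAvoidTop_two, SBAvoid_three, Set.encard_pair hne]
  | succ k ih =>
    have top : (SBAvoidTop (k + 3)).encard = ((2 * Nat.fib (2 * k + 2) : ℕ) : ℕ∞) := by
      rw [encard_SBAvoidTop_succ (by omega), ih.1, ih.2, Nat.fib_add_two (n := 2 * k)]
      norm_cast
      ring
    refine ⟨?_, top⟩
    rw [encard_SBAvoid_succ_succ (k + 2), ih.1, top,
      show 2 * (k + 1) + 1 = 2 * k + 1 + 2 by ring, Nat.fib_add_two (n := 2 * k + 1)]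
    norm_cast
    ring

/-- Proposition 1.5 a): `c_{2+m}(x_1) = 2 · F_{2m-1}` for all `m ≥ 1`. -/
theorem card_centralizer_x1 (m : ℕ) (hm : 1 ≤ m) :
    c (2 + m) (X 1) = 2 * Nat.fib (2 * m - 1) := by
  obtain ⟨k, rfl⟩ := Nat.exists_eq_add_of_le' hm
  rw [c, C_X_one, show 2 + (k + 1) = k + 3 by ring, Set.ncard, (encard_SBAvoid k).1]
  rfl
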